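/- arXiv:1803.06968 — 3 statements merged into one kernel-verified Lean document; each statement's English description precedes it below -/
import Mathlib

section
/- Let d ≥ 2 and let L_1, …, L_{d−1} be linearly independent linear forms of d−1 variables with real coefficients. Then the series Σ_{n ∈ ℤ^{d−1}, n ≠ 0} 1/(|n| · ∏_{k=1}^{d−1} (|L_k(n)| + 1)) converges. -/
open Real

/-- Euclidean norm of an integer vector. -/
noncomputable def znorm {m : ℕ} (n : Fin m → ℤ) : ℝ := Real.sqrt (∑ i, ((n i : ℝ)) ^ 2)

/-!
Independent linear forms have no common nontrivial zero, so they embed `ℤ^{d-1}` in `ℝ^{d-1}` as a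
set of points at mutual distance at least some `ε > 0`, and rounding these points down to the grid
`ε ℤ^{d-1}` is injective. Hence `∑ ∏ (|L_k(n)| + 1)^(-p)` is dominated by a power of the
convergent series `∑_j |j + 1/2|^(-p)` over `ℤ` whenever `p > 1`. Since every factor
`|L_k(n)| + 1` is `O(|n|)`, the additional factor `|n|` in the denominator can be spread evenly over
the product to raise each exponent from `1` to some `p > 1`.
-/

theorem summable_prod_pi {ι : Type*} [Fintype ι] {β : ι → Type*} {g : ∀ i, β i → ℝ}
    (hg : ∀ i b, 0 ≤ g i b) (hs : ∀ i, Summable (g i)) :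
    Summable fun f : ∀ i, β i => ∏ i, g i (f i) := by
  classical
  refine summable_of_sum_le (c := ∏ i, ∑' b, g i b)
    (fun f => Finset.prod_nonneg fun i _ => hg i _) fun u => ?_
  calc ∑ f ∈ u, ∏ i, g i (f i)
      ≤ ∑ f ∈ Fintype.piFinset fun i => u.image fun f => f i, ∏ i, g i (f i) :=
        Finset.sum_le_sum_of_subset_of_nonneg
          (fun f hf => Fintype.mem_piFinset.2 fun i => Finset.mem_image_of_mem (fun f => f i) hf)
          fun f _ _ => Finset.prod_nonneg fun i _ => hg i _
    _ = ∏ i, ∑ b ∈ u.image fun f => f i, g i b := (Finset.prod_univ_sum _ _).symm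
    _ ≤ ∏ i, ∑' b, g i b :=
        Finset.prod_le_prod (fun i _ => Finset.sum_nonneg fun b _ => hg i b)
          fun i _ => (hs i).sum_le_tsum _ fun b _ => hg i b

theorem abs_floor_add_half_le (x : ℝ) : |(⌊x⌋ : ℝ) + 1 / 2| ≤ |x| + 1 / 2 := by
  have hle := Int.floor_le x
  have hlt := Int.lt_floor_add_one x
  exact abs_le.2 ⟨by linarith [neg_abs_le x], by linarith [le_abs_self x]⟩

theorem abs_add_one_rpow_neg_le {ε p : ℝ} (hε : 0 < ε) (hp : 0 ≤ p) (x : ℝ) :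
    (|x| + 1) ^ (-p) ≤ (1 / ε + 1) ^ p * (1 / |(⌊x / ε⌋ : ℝ) + 1 / 2| ^ p) := by
  have half_ne : (⌊x / ε⌋ : ℝ) + 1 / 2 ≠ 0 := fun h => by
    have : (2 * ⌊x / ε⌋ + 1 : ℝ) = 0 := by linarith
    have : 2 * ⌊x / ε⌋ + 1 = 0 := by exact_mod_cast this
    omega
  have half_pos := abs_pos.2 half_ne
  have hbound : |(⌊x / ε⌋ : ℝ) + 1 / 2| ≤ (1 / ε + 1) * (|x| + 1) := by
    have hfloor := abs_floor_add_half_le (x / ε)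
    rw [abs_div, abs_of_pos hε] at hfloor
    have hexpand : (1 / ε + 1) * (|x| + 1) = |x| / ε + 1 / ε + |x| + 1 := by ring
    have : 0 < 1 / ε := by positivity
    linarith [abs_nonneg x]
  rw [rpow_neg (by positivity), mul_one_div, inv_eq_one_div,
    div_le_div_iff₀ (by positivity) (by positivity), one_mul,
    ← mul_rpow (by positivity) (by positivity)]
  exact rpow_le_rpow half_pos.le hbound hp

section SeparatedFamily

variable {α κ : Type*} [Fintype κ] {f : α → κ → ℝ} {ε : ℝ}

theorem injective_floor_div_of_pairwise_le_dist (hε : 0 < ε)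
    (hf : Pairwise fun a b => ε ≤ dist (f a) (f b)) :
    Function.Injective fun a k => ⌊f a k / ε⌋ := by
  intro a b hab
  by_contra hne
  refine (hf hne).not_gt ((dist_pi_lt_iff hε).2 fun k => ?_)
  have hlt := Int.abs_sub_lt_one_of_floor_eq_floor (congrFun hab k)
  rwa [← sub_div, abs_div, abs_of_pos hε, div_lt_one hε] at hlt

theorem summable_prod_rpow_of_pairwise_le_dist (hε : 0 < ε)
    (hf : Pairwise fun a b => ε ≤ dist (f a) (f b)) {p : ℝ} (hp : 1 < p) :
    Summable fun a => ∏ k, (|f a k| + 1) ^ (-p) := by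
  have hline : Summable fun j : ℤ => (1 / ε + 1) ^ p * (1 / |(j : ℝ) + 1 / 2| ^ p) :=
    ((summable_one_div_int_add_rpow (1 / 2) p).2 hp).mul_left _
  have hgrid := summable_prod_pi (ι := κ) (fun _ _ => by positivity) fun _ => hline
  have hpull := hgrid.comp_injective (injective_floor_div_of_pairwise_le_dist hε hf)
  refine Summable.of_nonneg_of_le (fun a => by positivity) (fun a => ?_) hpull
  exact Finset.prod_le_prod (fun k _ => by positivity) fun k _ =>
    abs_add_one_rpow_neg_le hε (by linarith) (f a k)

theorem prod_abs_add_one_rpow_le {δ : ℝ} (hδ : 0 ≤ δ) (x : κ → ℝ) :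
    ∏ k, (|x k| + 1) ^ δ ≤ (1 + ‖x‖) ^ (δ * Fintype.card κ) := by
  calc ∏ k, (|x k| + 1) ^ δ ≤ ∏ _k : κ, (1 + ‖x‖) ^ δ :=
        Finset.prod_le_prod (fun k _ => by positivity) fun k _ =>
          rpow_le_rpow (by positivity) (by linarith [norm_le_pi_norm x k, norm_eq_abs (x k)]) hδ
    _ = (1 + ‖x‖) ^ (δ * Fintype.card κ) := by
        rw [Finset.prod_const, Finset.card_univ, rpow_mul_natCast (by positivity)]

theorem summable_one_div_norm_rpow_mul_prod_of_pairwise_le_dist (hε : 0 < ε)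
    (hf : Pairwise fun a b => ε ≤ dist (f a) (f b)) {s : ℝ} (hs : 0 < s) :
    Summable fun a => 1 / ((1 + ‖f a‖) ^ s * ∏ k, (|f a k| + 1)) := by
  -- `card κ + 1` rather than `card κ`, so that `κ` may be empty.
  set δ : ℝ := s / (Fintype.card κ + 1)
  have hδ_pos : 0 < δ := by positivity
  have hδ_card : δ * Fintype.card κ ≤ s := by
    rw [div_mul_eq_mul_div, div_le_iff₀ (by positivity)]
    linarith
  refine .of_nonneg_of_le (fun a => by positivity) (fun a => ?_)
    (summable_prod_rpow_of_pairwise_le_dist hε hf (p := δ + 1) (by linarith))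
  calc 1 / ((1 + ‖f a‖) ^ s * ∏ k, (|f a k| + 1))
      ≤ 1 / ((∏ k, (|f a k| + 1) ^ δ) * ∏ k, (|f a k| + 1)) := by
        gcongr
        exact (prod_abs_add_one_rpow_le hδ_pos.le (f a)).trans
          (rpow_le_rpow_of_exponent_le (by linarith [norm_nonneg (f a)]) hδ_card)
    _ = ∏ k, (|f a k| + 1) ^ (-(δ + 1)) := by
        rw [← Finset.prod_mul_distrib, one_div, ← Finset.prod_inv_distrib]
        refine Finset.prod_congr rfl fun k _ => ?_
        rw [rpow_neg (by positivity), rpow_add_one (by positivity)]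

end SeparatedFamily

theorem pairwise_one_le_dist_pi_int {ι : Type*} [Fintype ι] :
    Pairwise fun n n' : ι → ℤ => 1 ≤ dist n n' := by
  intro n n' hne
  obtain ⟨i, hi⟩ := Function.ne_iff.1 hne
  exact (Int.pairwise_one_le_dist hi).trans (dist_le_pi_dist n n' i)

theorem exists_pairwise_le_dist_of_injective {ι F : Type*} [Finite ι] [NormedAddCommGroup F]
    [NormedSpace ℝ F] {T : (ι → ℝ) →ₗ[ℝ] F} (hT : Function.Injective T) :
    ∃ ε > 0, Pairwise fun n n' : ι → ℤ =>
      ε ≤ dist (T fun i => (n i : ℝ)) (T fun i => (n' i : ℝ)) := by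
  cases nonempty_fintype ι
  obtain ⟨K, hK_pos, hK⟩ := T.exists_antilipschitzWith (LinearMap.ker_eq_bot.2 hT)
  refine ⟨1 / K, by positivity, fun n n' hne => ?_⟩
  change 1 / (K : ℝ) ≤ _
  rw [div_le_iff₀' (by positivity)]
  calc 1 ≤ dist n n' := pairwise_one_le_dist_pi_int hne
    _ = dist (fun i => (n i : ℝ)) (fun i => (n' i : ℝ)) := by simp [dist_pi_def, nndist_dist]
    _ ≤ K * dist (T fun i => (n i : ℝ)) (T fun i => (n' i : ℝ)) := hK.le_mul_dist _ _

section EuclideanNorm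

variable {m : ℕ}

theorem norm_intCast_le_znorm (n : Fin m → ℤ) : ‖fun i => (n i : ℝ)‖ ≤ znorm n :=
  (pi_norm_le_iff_of_nonneg (sqrt_nonneg _)).2 fun i => by
    rw [Real.norm_eq_abs, ← sqrt_sq_eq_abs]
    exact sqrt_le_sqrt (Finset.single_le_sum (f := fun i => (n i : ℝ) ^ 2)
      (fun _ _ => sq_nonneg _) (Finset.mem_univ i))

theorem one_le_znorm {n : Fin m → ℤ} (hn : n ≠ 0) : 1 ≤ znorm n := by
  obtain ⟨i, hi⟩ := Function.ne_iff.1 hn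
  calc (1 : ℝ) ≤ |(n i : ℝ)| := by exact_mod_cast Int.one_le_abs hi
    _ ≤ ‖fun i => (n i : ℝ)‖ := norm_le_pi_norm (fun i => (n i : ℝ)) i
    _ ≤ znorm n := norm_intCast_le_znorm n

theorem exists_one_add_norm_le_mul_znorm {F : Type*} [NormedAddCommGroup F] [NormedSpace ℝ F]
    (T : (Fin m → ℝ) →ₗ[ℝ] F) :
    ∃ C > 0, ∀ n : Fin m → ℤ, n ≠ 0 → 1 + ‖T fun i => (n i : ℝ)‖ ≤ C * znorm n := by
  set T' := LinearMap.toContinuousLinearMap T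
  refine ⟨1 + ‖T'‖, by positivity, fun n hn => ?_⟩
  calc 1 + ‖T' fun i => (n i : ℝ)‖ ≤ znorm n + ‖T'‖ * znorm n :=
        add_le_add (one_le_znorm hn) (T'.le_opNorm_of_le (norm_intCast_le_znorm n))
    _ = (1 + ‖T'‖) * znorm n := by ring

end EuclideanNorm

theorem series_convergence_linear_forms_general {m : ℕ} {κ : Type*} [Fintype κ]
    (L : κ → Fin m → ℝ) (hL : Function.Injective (Matrix.of L).mulVec) {s : ℝ} (hs : 0 < s) :
    Summable (fun n : {n : Fin m → ℤ // n ≠ 0} =>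
      1 / (znorm n.1 ^ s * ∏ k, (|∑ i, L k i * (n.1 i : ℝ)| + 1))) := by
  set T := (Matrix.of L).mulVecLin
  obtain ⟨ε, hε, hsep⟩ := exists_pairwise_le_dist_of_injective (T := T) hL
  obtain ⟨C, hC, hle⟩ := exists_one_add_norm_le_mul_znorm T
  have hsum := ((summable_one_div_norm_rpow_mul_prod_of_pairwise_le_dist hε hsep hs).comp_injective
    (Subtype.val_injective (p := fun n : Fin m → ℤ => n ≠ 0))).mul_left (C ^ s)
  refine .of_nonneg_of_le (fun n => ?_) (fun n => ?_) hsum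
  · have := one_le_znorm n.2
    positivity
  · have hz := zero_lt_one.trans_le (one_le_znorm n.2)
    set P := ∏ k, (|T (fun i => (n.1 i : ℝ)) k| + 1)
    have : 0 < P := by positivity
    change 1 / (znorm n.1 ^ s * P) ≤ C ^ s * (1 / ((1 + ‖T fun i => (n.1 i : ℝ)‖) ^ s * P))
    rw [mul_one_div, div_le_div_iff₀ (by positivity) (by positivity), one_mul, ← mul_assoc,
      ← mul_rpow hC.le hz.le]
    gcongr
    exact hle n.1 n.2

/-- For linearly independent linear forms `L₁, …, L_{d-1}` of `d-1` variables, the series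
`∑_{n ∈ ℤ^{d-1}, n ≠ 0} 1/(|n| · ∏ (|L_k(n)|+1))` converges. -/
theorem series_convergence_linear_forms
    {d : ℕ} (hd : 2 ≤ d)
    (L : Fin (d - 1) → Fin (d - 1) → ℝ) (hLind : LinearIndependent ℝ L) :
    Summable (fun n : {n : Fin (d - 1) → ℤ // n ≠ 0} =>
      1 / (znorm n.1 * ∏ k, (|∑ i, L k i * (n.1 i : ℝ)| + 1))) := by
  simpa only [rpow_one] using series_convergence_linear_forms_general L
    (Matrix.mulVec_injective_iff_isUnit.2 (Matrix.linearIndependent_rows_iff_isUnit.1 hLind))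
    one_pos
end

section
/- Let α_1 be an irrational real number, and suppose there exists a constant η < 2 such that the inequality ‖n α_1‖ < |n|^{−η} has only finitely many integer solutions n ∈ ℤ, n ≠ 0. Then Σ_{n=1}^∞ 1/(n² ‖n α_1‖) < ∞. -/
open Real

/-- Distance from a real number to the nearest integer. -/
noncomputable def nint (x : ℝ) : ℝ := |x - round x|

/-!
If `‖nα‖ ≥ δ` for `0 < |n| ≤ N`, then the signed distances from `nα`, `1 ≤ n ≤ N`, to their nearest
integers are `δ`-separated, because their differences are congruent to `(m - n)α` modulo `1`.
Hence they are spaced at least like the nonzero multiples of `δ`, and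
`∑_{n ≤ N} ‖nα‖⁻¹ ≤ ∑_{n ≤ N} ‖nα‖^{-p} ≪ δ^{-p}` for every `p > 1`; taking `p > 1` instead of
`p = 1` makes the sum over multiples converge and costs nothing, since `η < 2` leaves room for
`p η < 2`. With `δ ≍ N^{-η}` the partial sums are `O(N^{pη})`, and Abel summation concludes.
-/

open Filter Topology

lemma nint_nonneg (x : ℝ) : 0 ≤ nint x :=
  abs_nonneg _

lemma nint_le_one (x : ℝ) : nint x ≤ 1 :=
  (abs_sub_round x).trans (by norm_num)

lemma nint_sub_le (x y : ℝ) : nint (x - y) ≤ |(x - round x) - (y - round y)| := by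
  have h := round_le (x - y) (round x - round y)
  rwa [Int.cast_sub, sub_sub_sub_comm] at h

lemma nint_intCast_mul_pos {α : ℝ} (hα : Irrational α) {n : ℤ} (hn : n ≠ 0) :
    0 < nint (n * α) :=
  abs_pos.2 (sub_ne_zero.2 ((hα.intCast_mul hn).ne_int _))

lemma exists_pos_mul_le_of_finite {ι : Type*} {s : Set ι} {f g : ι → ℝ}
    (hg : ∀ i ∈ s, 0 < g i) (hfin : {i ∈ s | g i < f i}.Finite) :
    ∃ c > 0, ∀ i ∈ s, c * f i ≤ g i := by
  have hsmall : ∀ᶠ c in 𝓝[>] (0 : ℝ), ∀ i ∈ {i ∈ s | g i < f i}, c * f i ≤ g i := by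
    refine (eventually_all_finite hfin).2 fun i hi => ?_
    have hlim : Tendsto (fun c : ℝ => c * f i) (𝓝[>] 0) (𝓝 0) :=
      ((continuous_mul_const (f i)).tendsto' 0 0 (zero_mul _)).mono_left nhdsWithin_le_nhds
    exact hlim.eventually_le_const (hg i hi.1)
  obtain ⟨c, hc, hc0, hc1⟩ := (hsmall.and (Ioo_mem_nhdsGT one_pos)).exists
  refine ⟨c, hc0, fun i hi => ?_⟩
  by_cases hi' : g i < f i
  · exact hc i ⟨hi, hi'⟩
  · calc c * f i ≤ c * g i := by gcongr; exact not_lt.1 hi'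
      _ ≤ g i := mul_le_of_le_one_left (hg i hi).le hc1.le

lemma abs_rpow_neg_le_two_rpow_mul_abs_floor_rpow_neg {y p : ℝ} (hy : 1 ≤ |y|) (hp : 0 ≤ p) :
    |y| ^ (-p) ≤ 2 ^ p * |(⌊y⌋ : ℝ)| ^ (-p) := by
  have hfloor_ne : ⌊y⌋ ≠ 0 := by
    rw [Ne, Int.floor_eq_zero_iff]
    rintro ⟨h0, h1⟩
    exact hy.not_gt ((abs_of_nonneg h0).trans_lt h1)
  have hfloor_le : |(⌊y⌋ : ℝ)| ≤ 2 * |y| := by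
    rw [abs_le]
    constructor <;> linarith [Int.floor_le y, Int.lt_floor_add_one y, neg_abs_le y, le_abs_self y]
  calc |y| ^ (-p) = 2 ^ p * (2 * |y|) ^ (-p) := by
        rw [mul_rpow two_pos.le (abs_nonneg y), ← mul_assoc, ← rpow_add two_pos, add_neg_cancel,
          rpow_zero, one_mul]
    _ ≤ 2 ^ p * |(⌊y⌋ : ℝ)| ^ (-p) := by
        gcongr ?_ * ?_
        exact rpow_le_rpow_of_nonpos (by positivity) hfloor_le (neg_nonpos.2 hp)

/-- The term `j = 0` on the right vanishes, since `0 ^ (-p) = 0` for `p ≠ 0`. -/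
lemma sum_abs_rpow_neg_le_of_one_separated {ι : Type*} {p : ℝ} (hp : 1 < p) {s : Finset ι}
    {x : ι → ℝ} (hx : ∀ i ∈ s, 1 ≤ |x i|)
    (hsep : (s : Set ι).Pairwise fun i j => 1 ≤ |x i - x j|) :
    ∑ i ∈ s, |x i| ^ (-p) ≤ 2 ^ p * ∑' j : ℤ, |(j : ℝ)| ^ (-p) := by
  have hinj : Set.InjOn (fun i => ⌊x i⌋) s := fun i hi j hj hij => by
    by_contra hne
    exact (hsep hi hj hne).not_gt (Int.abs_sub_lt_one_of_floor_eq_floor hij)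
  calc ∑ i ∈ s, |x i| ^ (-p)
      ≤ ∑ i ∈ s, 2 ^ p * |(⌊x i⌋ : ℝ)| ^ (-p) := Finset.sum_le_sum fun i hi =>
        abs_rpow_neg_le_two_rpow_mul_abs_floor_rpow_neg (hx i hi) (zero_le_one.trans hp.le)
    _ = 2 ^ p * ∑ j ∈ s.image fun i => ⌊x i⌋, |(j : ℝ)| ^ (-p) := by
        rw [Finset.sum_image hinj, Finset.mul_sum]
    _ ≤ 2 ^ p * ∑' j : ℤ, |(j : ℝ)| ^ (-p) := by
        gcongr
        exact (summable_abs_int_rpow hp).sum_le_tsum _ fun j _ => by positivity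

lemma sum_abs_rpow_neg_le_of_separated {ι : Type*} {δ p : ℝ} (hδ : 0 < δ) (hp : 1 < p)
    {s : Finset ι} {x : ι → ℝ} (hx : ∀ i ∈ s, δ ≤ |x i|)
    (hsep : (s : Set ι).Pairwise fun i j => δ ≤ |x i - x j|) :
    ∑ i ∈ s, |x i| ^ (-p) ≤ (2 / δ) ^ p * ∑' j : ℤ, |(j : ℝ)| ^ (-p) := by
  have one_le_abs_div {y : ℝ} (hy : δ ≤ |y|) : 1 ≤ |y / δ| := by
    rwa [abs_div, abs_of_pos hδ, one_le_div hδ]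
  have hscaled := sum_abs_rpow_neg_le_of_one_separated (x := fun i => x i / δ) hp
    (fun i hi => one_le_abs_div (hx i hi)) fun i hi j hj hij => by
      simpa only [sub_div] using one_le_abs_div (hsep hi hj hij)
  calc ∑ i ∈ s, |x i| ^ (-p) = δ ^ (-p) * ∑ i ∈ s, |x i / δ| ^ (-p) := by
        rw [Finset.mul_sum]
        refine Finset.sum_congr rfl fun i _ => ?_
        rw [← mul_rpow hδ.le (abs_nonneg _), abs_div, abs_of_pos hδ, mul_div_cancel₀ _ hδ.ne']
    _ ≤ δ ^ (-p) * (2 ^ p * ∑' j : ℤ, |(j : ℝ)| ^ (-p)) := by gcongr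
    _ = (2 / δ) ^ p * ∑' j : ℤ, |(j : ℝ)| ^ (-p) := by
        rw [div_rpow two_pos.le hδ.le, rpow_neg hδ.le]
        ring

lemma sum_inv_nint_le_of_forall_le_nint {α δ p : ℝ} (hδ : 0 < δ) (hp : 1 < p) {N : ℕ}
    (hgap : ∀ n : ℤ, n ≠ 0 → |n| ≤ N → δ ≤ nint (n * α)) :
    ∑ n ∈ Finset.Icc 1 N, (nint (n * α))⁻¹ ≤ (2 / δ) ^ p * ∑' j : ℤ, |(j : ℝ)| ^ (-p) := by
  have hlow : ∀ n ∈ Finset.Icc 1 N, δ ≤ nint (n * α) := fun n hn => by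
    rw [Finset.mem_Icc] at hn
    exact_mod_cast hgap n (by omega) (by rw [abs_le]; omega)
  have hsep : (Finset.Icc 1 N : Set ℕ).Pairwise fun m n =>
      δ ≤ |(m * α - round (m * α)) - (n * α - round (n * α))| := by
    intro m hm n hn hmn
    rw [Finset.mem_coe, Finset.mem_Icc] at hm hn
    have hdiff := hgap (m - n) (by omega) (by rw [abs_le]; omega)
    rw [Int.cast_sub, sub_mul] at hdiff
    exact hdiff.trans (nint_sub_le _ _)
  calc ∑ n ∈ Finset.Icc 1 N, (nint (n * α))⁻¹
      ≤ ∑ n ∈ Finset.Icc 1 N, nint (n * α) ^ (-p) := by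
        refine Finset.sum_le_sum fun n hn => ?_
        rw [← rpow_neg_one]
        exact rpow_le_rpow_of_exponent_ge (hδ.trans_le (hlow n hn)) (nint_le_one _)
          (neg_le_neg hp.le)
    _ ≤ (2 / δ) ^ p * ∑' j : ℤ, |(j : ℝ)| ^ (-p) :=
        sum_abs_rpow_neg_le_of_separated hδ hp hlow hsep

/-- `α` is Diophantine with exponent `η`: for some `c > 0`, every nonzero integer `n` satisfies
`‖nα‖ ≥ c |n|^{-η}`. The constant `c` absorbs finitely many exceptions to `‖nα‖ ≥ |n|^{-η}`. The
exponent applies to `‖nα‖`, not to `|α - m / n|`, for which it would be `η + 1`. -/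
def IsDiophantine (α η : ℝ) : Prop :=
  ∃ c > 0, ∀ n : ℤ, n ≠ 0 → c * |(n : ℝ)| ^ (-η) ≤ nint (n * α)

lemma isDiophantine_of_finite {α η : ℝ} (hα : Irrational α)
    (hfin : {n : ℤ | nint (n * α) < |(n : ℝ)| ^ (-η)}.Finite) : IsDiophantine α η :=
  exists_pos_mul_le_of_finite (s := {0}ᶜ) (fun _ => nint_intCast_mul_pos hα)
    (hfin.subset fun _ hn => hn.2)

namespace IsDiophantine

variable {α η : ℝ}

lemma mono {η' : ℝ} (hα : IsDiophantine α η) (hη : η ≤ η') : IsDiophantine α η' := by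
  obtain ⟨c, hc, hcα⟩ := hα
  refine ⟨c, hc, fun n hn => le_trans ?_ (hcα n hn)⟩
  have hn1 : 1 ≤ |(n : ℝ)| := by exact_mod_cast Int.one_le_abs hn
  gcongr

lemma exists_pos_mul_rpow_le_nint (hα : IsDiophantine α η) (hη : 0 ≤ η) :
    ∃ c > 0, ∀ N : ℕ, ∀ n : ℤ, n ≠ 0 → |n| ≤ N → c * (N : ℝ) ^ (-η) ≤ nint (n * α) := by
  obtain ⟨c, hc, hcα⟩ := hα
  refine ⟨c, hc, fun N n hn hnN => le_trans ?_ (hcα n hn)⟩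
  have hnN' : |(n : ℝ)| ≤ N := by exact_mod_cast hnN
  gcongr ?_ * ?_
  exact rpow_le_rpow_of_nonpos (by positivity) hnN' (neg_nonpos.2 hη)

/-- By Dirichlet's theorem `‖kα‖ < 1 / N` for some `0 < k ≤ N`, which an exponent below `1` rules
out for large `N`. -/
theorem one_le (hα : IsDiophantine α η) : 1 ≤ η := by
  by_contra! hη
  obtain ⟨c, hc, hcα⟩ := (hα.mono (le_max_left η 0)).exists_pos_mul_rpow_le_nint (le_max_right η 0)
  set θ := max η 0
  have hlim : Tendsto (fun N : ℕ => (N : ℝ) ^ (-(1 - θ))) atTop (𝓝 0) :=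
    (tendsto_rpow_neg_atTop (sub_pos.2 (max_lt hη one_pos))).comp tendsto_natCast_atTop_atTop
  obtain ⟨N, hN, hN0⟩ := ((hlim.eventually_lt_const hc).and (eventually_gt_atTop 0)).exists
  have hN0' : (0 : ℝ) < N := by exact_mod_cast hN0
  obtain ⟨k, hk, hkN, hkα⟩ := exists_nat_abs_mul_sub_round_le α hN0
  have hlow : c * (N : ℝ) ^ (-θ) ≤ nint (k * α) := by
    exact_mod_cast hcα N k (by omega) (by rw [abs_le]; omega)
  refine hlow.not_gt ?_
  calc nint (k * α) ≤ 1 / (N + 1) := hkα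
    _ ≤ (N : ℝ) ^ (-1 : ℝ) := by
        rw [rpow_neg_one, ← one_div]
        gcongr
        linarith
    _ = (N : ℝ) ^ (-(1 - θ)) * (N : ℝ) ^ (-θ) := by
        rw [← rpow_add hN0']
        ring_nf
    _ < c * (N : ℝ) ^ (-θ) := by gcongr

theorem sum_inv_nint_isBigO (hα : IsDiophantine α η) {p : ℝ} (hp : 1 < p) :
    (fun N : ℕ => ∑ n ∈ Finset.Icc 1 N, (nint (n * α))⁻¹) =O[atTop]
      fun N : ℕ => (N : ℝ) ^ (p * η) := by
  obtain ⟨c, hc, hcα⟩ := hα.exists_pos_mul_rpow_le_nint (zero_le_one.trans hα.one_le)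
  refine Asymptotics.IsBigO.of_bound ((2 / c) ^ p * ∑' j : ℤ, |(j : ℝ)| ^ (-p)) ?_
  filter_upwards [eventually_gt_atTop 0] with N hN
  have hN' : (0 : ℝ) < N := by exact_mod_cast hN
  rw [norm_of_nonneg (Finset.sum_nonneg fun n _ => inv_nonneg.2 (nint_nonneg _)),
    norm_of_nonneg (by positivity)]
  calc ∑ n ∈ Finset.Icc 1 N, (nint (n * α))⁻¹
      ≤ (2 / (c * (N : ℝ) ^ (-η))) ^ p * ∑' j : ℤ, |(j : ℝ)| ^ (-p) :=
        sum_inv_nint_le_of_forall_le_nint (by positivity) hp (hcα N)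
    _ = (2 / c * (N : ℝ) ^ η) ^ p * ∑' j : ℤ, |(j : ℝ)| ^ (-p) := by
        rw [rpow_neg hN'.le, ← div_div, div_inv_eq_mul]
    _ = (2 / c) ^ p * (∑' j : ℤ, |(j : ℝ)| ^ (-p)) * (N : ℝ) ^ (p * η) := by
        rw [mul_rpow (by positivity) (by positivity), ← rpow_mul hN'.le, mul_comm η p]
        ring

end IsDiophantine

lemma summable_div_rpow_of_sum_isBigO {a : ℕ → ℝ} {r s : ℝ} (ha : ∀ n, 0 ≤ a n) (hr : 0 ≤ r)
    (hrs : r < s) (hO : (fun N => ∑ n ∈ Finset.Icc 1 N, a n) =O[atTop] fun N => (N : ℝ) ^ r) :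
    Summable fun n : ℕ+ => a n / (n : ℝ) ^ s := by
  have hL : LSeriesSummable (fun n => a n) s :=
    LSeriesSummable_of_sum_norm_bigO_and_nonneg hO ha hr (by simpa using hrs)
  refine (hL.norm.comp_injective PNat.coe_injective).congr fun n => ?_
  simp [LSeries.norm_term_eq, abs_of_nonneg (ha n)]

theorem summable_inv_sq_mul_nint_general {α η s : ℝ} (hα : IsDiophantine α η) (hs : η < s) :
    Summable fun n : ℕ+ => 1 / ((n : ℝ) ^ s * nint (n * α)) := by
  have hη : 0 < η := one_pos.trans_le hα.one_le
  obtain ⟨p, hp, hps⟩ := exists_between ((one_lt_div hη).2 hs)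
  rw [lt_div_iff₀ hη] at hps
  refine (summable_div_rpow_of_sum_isBigO (fun n => inv_nonneg.2 (nint_nonneg (n * α)))
    (by positivity) hps (hα.sum_inv_nint_isBigO hp)).congr fun n => ?_
  rw [← one_div, div_div, mul_comm]

/-- If there is `η < 2` such that `‖nα₁‖ < |n|^{-η}` has only finitely many integer
solutions, then `∑_{n=1}^∞ 1/(n²‖nα₁‖) < ∞`. -/
theorem summable_inv_sq_mul_nint
    (α₁ : ℝ) (hirr : Irrational α₁) (η : ℝ) (hη : η < 2)
    (hfin : {n : ℤ | nint ((n : ℝ) * α₁) < |(n : ℝ)| ^ (-η)}.Finite) :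
    Summable (fun n : ℕ+ => 1 / ((n : ℝ) ^ 2 * nint ((n : ℝ) * α₁))) := by
  simpa only [rpow_two] using
    summable_inv_sq_mul_nint_general (isDiophantine_of_finite hirr hfin) hη
end

section
/- For every d ≥ 2 there exists a continuous curve g = (g_1, …, g_d) : [0,∞) → ℝ^d whose arc length ℓ_T on [0,T] satisfies ℓ_T = cT for some constant c > 0, and a constant C > 0, such that for all T > 0, sup_{R ∈ 𝓡} |Δ_T(g, R)| ≤ C, where 𝓡 is the family of axis-parallel boxes R = ∏_{k=1}^d [a_k, b_k] ⊆ [0,1]^d. In particular, for d ≥ 3 and 0 < ε < d − 2, the statement that sup_{R ∈ 𝓡} |Δ_T(g, R)/T| = Ω((log ℓ_T)^{d−2−ε}/ℓ_T) fails for this curve, so there is no van Aardenne–Ehrenfest type lower bound for the mod 1 discrepancy of continuous curves. -/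
open MeasureTheory Real Filter

/-- `Δ_T(g, A) = ∫_0^T χ_A({g(t)}) dt - T·λ(A)` for a curve `g : [0,∞) → ℝ^d` and
`A ⊆ [0,1]^d`. -/
noncomputable def DeltaCurve {d : ℕ} (g : ℝ → (Fin d → ℝ)) (A : Set (Fin d → ℝ))
    (T : ℝ) : ℝ :=
  (∫ t in (0:ℝ)..T, Set.indicator A (fun _ => (1:ℝ)) (fun i => Int.fract (g t i)))
    - T * (volume A).toReal

/-!
The curve is the line `t ↦ t α` in almost any direction `α`. The time its projection to the torus
spends in a box up to time `T` is a continuous function of the starting point. Its `n`-th Fourier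
coefficient is that of the box, of size at most `∏ i, 1 / max 1 |nᵢ|`, times the integral of the
`n`-th character along the line, of size at most `1 / |⟨n, α⟩|`, whatever `T` is. So the
discrepancy is bounded by the sum of these products over `n ≠ 0`, provided it converges.

The factor `1 / |⟨n, α⟩|` is not integrable in `α`, but its `p`-th power is for `p < 1`.
Rescaling the coordinate where `|nᵢ|` is largest gains a factor `∏ i, (max 1 |nᵢ|) ^ (-p / d)`,
so the integrals of the `p`-th powers of the terms are summable once `p + p / d > 1`. Hence for
almost every `α` the `p`-th powers of the terms are summable, and then so are the terms.
-/

theorem tsum_pi_prod_le_prod_tsum {ι : Type*} [Fintype ι] {κ : ι → Type*}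
    (f : (i : ι) → κ i → ENNReal) :
    ∑' n : (i : ι) → κ i, ∏ i, f i (n i) ≤ ∏ i, ∑' k, f i k := by
  classical
  rw [ENNReal.tsum_eq_iSup_sum]
  refine iSup_le fun s => ?_
  calc ∑ n ∈ s, ∏ i, f i (n i)
      ≤ ∑ n ∈ Fintype.piFinset fun i => s.image (· i), ∏ i, f i (n i) :=
        Finset.sum_le_sum_of_subset fun n hn =>
          Fintype.mem_piFinset.2 fun i => Finset.mem_image_of_mem (· i) hn
    _ = ∏ i, ∑ k ∈ s.image (· i), f i k := (Finset.prod_univ_sum _ _).symm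
    _ ≤ ∏ i, ∑' k, f i k := Finset.prod_le_prod' fun i _ => ENNReal.sum_le_tsum _

theorem ae_summable_of_tsum_lintegral_ofReal_ne_top {Ω κ : Type*} [MeasurableSpace Ω]
    [Countable κ] {μ : Measure Ω} {f : κ → Ω → ℝ} (hf : ∀ n, Measurable (f n))
    (hf0 : ∀ n x, 0 ≤ f n x) (h : ∑' n, ∫⁻ x, ENNReal.ofReal (f n x) ∂μ ≠ ⊤) :
    ∀ᵐ x ∂μ, Summable fun n => f n x := by
  rw [← lintegral_tsum fun n => (hf n).ennreal_ofReal.aemeasurable] at h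
  filter_upwards [ae_lt_top (Measurable.tsum fun n => (hf n).ennreal_ofReal) h] with x hx
  simpa only [ENNReal.toReal_ofReal (hf0 _ x)] using ENNReal.summable_toReal hx.ne

theorem summable_of_summable_rpow {κ : Type*} {f : κ → ℝ} {p : ℝ} (hp0 : 0 ≤ p) (hp1 : p ≤ 1)
    (hf : ∀ n, 0 ≤ f n) (h : Summable fun n => f n ^ p) : Summable f := by
  refine h.of_norm_bounded_eventually ?_
  filter_upwards [h.tendsto_cofinite_zero.eventually_lt_const one_pos] with n hn
  have hn1 : f n ≤ 1 := not_lt.1 fun h1 => hn.not_ge (Real.one_le_rpow h1.le hp0)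
  rw [Real.norm_of_nonneg (hf n)]
  exact Real.self_le_rpow_of_le_one (hf n) hn1 hp1

theorem lintegral_Icc_abs_rpow_neg_ne_top {p : ℝ} (hp : p < 1) :
    ∫⁻ x in Set.Icc (-1) 1, ENNReal.ofReal (|x| ^ (-p)) ≠ ⊤ := by
  have hpos : IntervalIntegrable (fun x : ℝ => |x| ^ (-p)) volume 0 1 :=
    (intervalIntegral.intervalIntegrable_rpow' (r := -p) (by linarith)).congr fun x hx => by
      rw [Set.uIoc_of_le zero_le_one] at hx
      simp only [abs_of_pos hx.1]
  have hneg : IntervalIntegrable (fun x : ℝ => |x| ^ (-p)) volume (-1) 0 := by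
    simpa using (hpos.comp_mul_left (c := -1)).symm
  have h : IntegrableOn (fun x : ℝ => |x| ^ (-p)) (Set.Icc (-1) 1) :=
    (intervalIntegrable_iff_integrableOn_Icc_of_le (by norm_num)).1 (hneg.trans hpos)
  exact h.lintegral_lt_top.ne

theorem setLIntegral_abs_add_rpow_neg_le {p : ℝ} (hp : 0 ≤ p) (s : Set ℝ) (v : ℝ) :
    ∫⁻ u in s, ENNReal.ofReal (|u + v| ^ (-p)) ≤
      (∫⁻ x in Set.Icc (-1) 1, ENNReal.ofReal (|x| ^ (-p))) + volume s := by
  set φ : ℝ → ENNReal := (Set.Icc (-1) 1).indicator fun x => ENNReal.ofReal (|x| ^ (-p)) with hφ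
  have hle (x : ℝ) : ENNReal.ofReal (|x| ^ (-p)) ≤ φ x + 1 := by
    by_cases hx : x ∈ Set.Icc (-1) 1
    · rw [hφ, Set.indicator_of_mem hx]
      exact le_self_add
    · have h1 : 1 ≤ |x| := (not_le.1 fun h => hx (abs_le.1 h)).le
      exact le_add_of_le_right
        (ENNReal.ofReal_le_one.2 (Real.rpow_le_one_of_one_le_of_nonpos h1 (neg_nonpos.2 hp)))
  calc ∫⁻ u in s, ENNReal.ofReal (|u + v| ^ (-p))
      ≤ ∫⁻ u in s, (φ (u + v) + 1) := lintegral_mono fun u => hle _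
    _ = (∫⁻ u in s, φ (u + v)) + volume s := by
        rw [lintegral_add_right _ measurable_const, setLIntegral_one]
    _ ≤ (∫⁻ u, φ (u + v)) + volume s := by
        gcongr
        exact Measure.restrict_le_self
    _ = _ := by rw [lintegral_add_right_eq_self φ v, lintegral_indicator measurableSet_Icc]

theorem iUnion_pi_Icc_intCast_eq_univ {ι : Type*} :
    ⋃ m : ι → ℤ, Set.univ.pi (fun i => Set.Icc (m i : ℝ) (m i + 1)) = Set.univ :=
  Set.eq_univ_of_forall fun α => Set.mem_iUnion.2
    ⟨fun i => ⌊α i⌋, fun _ _ => ⟨Int.floor_le _, (Int.lt_floor_add_one _).le⟩⟩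

section SmallDivisors

variable {ι : Type*} [Fintype ι]

theorem ae_linearIndependent_int : ∀ᵐ α : ι → ℝ, LinearIndependent ℤ α := by
  classical
  have hyperplane_null (n : ι → ℤ) (hn : n ≠ 0) : ∀ᵐ α : ι → ℝ, ∑ i, n i • α i ≠ 0 := by
    obtain ⟨j, hj⟩ := Function.ne_iff.1 hn
    let L : (ι → ℝ) →ₗ[ℝ] ℝ := Fintype.linearCombination ℝ fun i => (n i : ℝ)
    have hL : LinearMap.ker L ≠ ⊤ := fun h => by
      have : L (Pi.single j 1) = 0 := LinearMap.mem_ker.1 (h ▸ Submodule.mem_top)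
      simp only [L, Fintype.linearCombination_apply_single, one_smul, Int.cast_eq_zero] at this
      exact hj this
    filter_upwards [measure_eq_zero_iff_ae_notMem.1 (Measure.addHaar_submodule volume _ hL)]
      with α hα
    simpa [L, Fintype.linearCombination_apply, mul_comm] using hα
  filter_upwards [ae_all_iff.2 fun n : ι → ℤ => eventually_imp_distrib_left.2 (hyperplane_null n)]
    with α hα
  refine Fintype.linearIndependent_iff.2 fun n hn => ?_
  exact congrFun (not_not.1 fun h => hα n h hn)

/-- The `n`-th term of the small divisor series of the direction `α`: the weight
`∏ i, 1 / max 1 |nᵢ|` bounds the `n`-th Fourier coefficient of any box in the torus, and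
`1 / |⟨n, α⟩|` bounds the integrals of the `n`-th character along the line `t ↦ t α`.
As `x / 0 = 0`, the term at `n = 0` vanishes. -/
noncomputable def smallDivisorTerm (α : ι → ℝ) (n : ι → ℤ) : ℝ :=
  (∏ i, (max 1 |(n i : ℝ)|)⁻¹) / |∑ i, (n i : ℝ) * α i|

theorem smallDivisorTerm_nonneg (α : ι → ℝ) (n : ι → ℤ) : 0 ≤ smallDivisorTerm α n := by
  unfold smallDivisorTerm
  positivity

theorem smallDivisorTerm_rpow (α : ι → ℝ) (n : ι → ℤ) (p : ℝ) :
    smallDivisorTerm α n ^ p =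
      (∏ i, max 1 |(n i : ℝ)| ^ (-p)) * |∑ i, (n i : ℝ) * α i| ^ (-p) := by
  rw [smallDivisorTerm, Real.div_rpow (by positivity) (by positivity),
    ← Real.finsetProd_rpow _ _ fun i _ => by positivity, Real.rpow_neg (abs_nonneg _),
    div_eq_mul_inv]
  congr 1
  exact Finset.prod_congr rfl fun i _ => by
    rw [Real.inv_rpow (by positivity), Real.rpow_neg (by positivity)]

theorem lintegral_abs_sum_mul_rpow_neg_le {ν : ι → Measure ℝ} [∀ i, IsProbabilityMeasure (ν i)]
    {p : ℝ} {K : ENNReal} {j : ι} (hK : ∀ v, ∫⁻ u, ENNReal.ofReal (|u + v| ^ (-p)) ∂ν j ≤ K)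
    {c : ι → ℝ} (hj : c j ≠ 0) :
    ∫⁻ α, ENNReal.ofReal (|∑ i, c i * α i| ^ (-p)) ∂Measure.pi ν ≤
      ENNReal.ofReal (|c j| ^ (-p)) * K := by
  classical
  have slice (α : ι → ℝ) : ∫⁻ u, ENNReal.ofReal (|∑ i, c i * Function.update α j u i| ^ (-p)) ∂ν j ≤
      ENNReal.ofReal (|c j| ^ (-p)) * K := by
    set v := (∑ i ∈ Finset.univ.erase j, c i * α i) / c j with hv
    have sum_update (u : ℝ) : ∑ i, c i * Function.update α j u i = c j * (u + v) := by
      rw [← Finset.add_sum_erase _ _ (Finset.mem_univ j), Function.update_self, hv, mul_add,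
        mul_div_cancel₀ _ hj]
      congr 1
      exact Finset.sum_congr rfl fun i hi => by
        rw [Function.update_of_ne (Finset.ne_of_mem_erase hi)]
    simp only [sum_update, abs_mul, Real.mul_rpow (abs_nonneg _) (abs_nonneg _),
      ENNReal.ofReal_mul (Real.rpow_nonneg (abs_nonneg (c j)) _)]
    rw [lintegral_const_mul _ (by fun_prop)]
    gcongr
    exact hK v
  rw [lintegral_eq_lmarginal_univ 0, lmarginal_erase' _ (by fun_prop) (Finset.mem_univ j)]
  refine (lmarginal_mono (g := fun _ => ENNReal.ofReal (|c j| ^ (-p)) * K) slice _).trans ?_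
  simp [lmarginal]

theorem exists_abs_rpow_neg_le_prod {n : ι → ℤ} (hn : n ≠ 0) {p : ℝ} (hp : 0 ≤ p) :
    ∃ j, n j ≠ 0 ∧
      |(n j : ℝ)| ^ (-p) ≤ ∏ i, max 1 |(n i : ℝ)| ^ (-(p / Fintype.card ι)) := by
  obtain ⟨k, hk⟩ := Function.ne_iff.1 hn
  have : Nonempty ι := ⟨k⟩
  obtain ⟨j, hj⟩ := Finite.exists_max fun i => |n i|
  have hj1 : 1 ≤ |n j| := (Int.one_le_abs hk).trans (hj k)
  refine ⟨j, abs_pos.1 (zero_lt_one.trans_le hj1), ?_⟩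
  calc |(n j : ℝ)| ^ (-p) = ∏ _i : ι, |(n j : ℝ)| ^ (-(p / Fintype.card ι)) := by
        rw [Finset.prod_const, Finset.card_univ, ← Real.rpow_mul_natCast (abs_nonneg _)]
        congr 1
        field_simp
    _ ≤ _ := by
        refine Finset.prod_le_prod (fun i _ => by positivity) fun i _ =>
          Real.rpow_le_rpow_of_nonpos (by positivity) (max_le ?_ ?_) (neg_nonpos.2 (by positivity))
        · exact_mod_cast hj1
        · exact_mod_cast hj i

theorem lintegral_smallDivisorTerm_rpow_le {ν : ι → Measure ℝ} [∀ i, IsProbabilityMeasure (ν i)]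
    {p : ℝ} {K : ENNReal} (hp : 0 < p)
    (hK : ∀ i v, ∫⁻ u, ENNReal.ofReal (|u + v| ^ (-p)) ∂ν i ≤ K) (n : ι → ℤ) :
    ∫⁻ α, ENNReal.ofReal (smallDivisorTerm α n ^ p) ∂Measure.pi ν ≤
      (∏ i, ENNReal.ofReal (max 1 |(n i : ℝ)| ^ (-(p + p / Fintype.card ι)))) * K := by
  rcases eq_or_ne n 0 with rfl | hn
  · simp [smallDivisorTerm, Real.zero_rpow hp.ne']
  obtain ⟨j, hj, hnj⟩ := exists_abs_rpow_neg_le_prod hn hp.le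
  set w : ℝ → ENNReal := fun q => ENNReal.ofReal (∏ i, max 1 |(n i : ℝ)| ^ (-q))
  calc ∫⁻ α, ENNReal.ofReal (smallDivisorTerm α n ^ p) ∂Measure.pi ν
      = w p * ∫⁻ α, ENNReal.ofReal (|∑ i, (n i : ℝ) * α i| ^ (-p)) ∂Measure.pi ν := by
        rw [← lintegral_const_mul _ (by fun_prop)]
        refine lintegral_congr fun α => ?_
        rw [smallDivisorTerm_rpow, ENNReal.ofReal_mul (by positivity)]
    _ ≤ w p * (ENNReal.ofReal (|(n j : ℝ)| ^ (-p)) * K) := by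
        gcongr
        exact lintegral_abs_sum_mul_rpow_neg_le (hK j) (Int.cast_ne_zero.2 hj)
    _ ≤ w p * (w (p / Fintype.card ι) * K) := by
        gcongr
        exact ENNReal.ofReal_le_ofReal hnj
    _ = _ := by
        rw [← mul_assoc, ← ENNReal.ofReal_mul (by positivity), ← Finset.prod_mul_distrib,
          ← ENNReal.ofReal_prod_of_nonneg fun i _ => by positivity]
        congr 3 with i
        rw [← Real.rpow_add (by positivity), neg_add]

theorem summable_max_one_abs_int_rpow_neg {q : ℝ} (hq : 1 < q) :
    Summable fun k : ℤ => max 1 |(k : ℝ)| ^ (-q) := by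
  refine (summable_congr_cofinite ?_).1 (Real.summable_abs_int_rpow hq)
  filter_upwards [(Set.finite_singleton (0 : ℤ)).compl_mem_cofinite] with k hk
  rw [max_eq_right (by exact_mod_cast Int.one_le_abs hk)]

theorem ae_summable_smallDivisorTerm_pi {ν : ι → Measure ℝ} [∀ i, IsProbabilityMeasure (ν i)]
    {p : ℝ} {K : ENNReal} (hp0 : 0 < p) (hp1 : p ≤ 1) (hpι : 1 < p + p / Fintype.card ι)
    (hK : ∀ i v, ∫⁻ u, ENNReal.ofReal (|u + v| ^ (-p)) ∂ν i ≤ K) (hKtop : K ≠ ⊤) :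
    ∀ᵐ α ∂Measure.pi ν, Summable (smallDivisorTerm α) := by
  have hfin : ∑' n : ι → ℤ, ∫⁻ α, ENNReal.ofReal (smallDivisorTerm α n ^ p) ∂Measure.pi ν ≠ ⊤ := by
    refine ne_top_of_le_ne_top ?_
      (ENNReal.tsum_le_tsum fun n => lintegral_smallDivisorTerm_rpow_le hp0 hK n)
    rw [ENNReal.tsum_mul_right]
    exact ENNReal.mul_ne_top (ne_top_of_le_ne_top
      (ENNReal.prod_ne_top fun _ _ => (summable_max_one_abs_int_rpow_neg hpι).tsum_ofReal_ne_top)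
      (tsum_pi_prod_le_prod_tsum _)) hKtop
  filter_upwards [ae_summable_of_tsum_lintegral_ofReal_ne_top
    (fun n => by unfold smallDivisorTerm; fun_prop)
    (fun n α => Real.rpow_nonneg (smallDivisorTerm_nonneg α n) p) hfin] with α hα
  exact summable_of_summable_rpow hp0.le hp1 (smallDivisorTerm_nonneg α) hα

theorem ae_summable_smallDivisorTerm : ∀ᵐ α : ι → ℝ, Summable (smallDivisorTerm α) := by
  cases isEmpty_or_nonempty ι
  · exact .of_forall fun α => .of_finite
  have hι : (0 : ℝ) < Fintype.card ι := by exact_mod_cast Fintype.card_pos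
  obtain ⟨p, hp, hp1⟩ : ∃ p : ℝ, Fintype.card ι / (Fintype.card ι + 1 : ℝ) < p ∧ p < 1 :=
    exists_between ((div_lt_one (by positivity)).2 (lt_add_one _))
  have hp0 : 0 < p := lt_trans (by positivity) hp
  have hpι : 1 < p + p / Fintype.card ι := by
    rw [div_lt_iff₀ (by positivity)] at hp
    rw [← mul_lt_mul_iff_left₀ hι, add_mul, div_mul_cancel₀ _ hι.ne']
    linarith
  have hcube (m : ι → ℤ) : ∀ᵐ α ∂(volume : Measure (ι → ℝ)).restrict
      (Set.univ.pi fun i => Set.Icc (m i : ℝ) (m i + 1)), Summable (smallDivisorTerm α) := by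
    have hprob (i : ι) : IsProbabilityMeasure (volume.restrict (Set.Icc (m i : ℝ) (m i + 1))) :=
      ⟨by simp⟩
    rw [volume_pi, Measure.restrict_pi_pi]
    refine ae_summable_smallDivisorTerm_pi hp0 hp1.le hpι
      (fun i v => (setLIntegral_abs_add_rpow_neg_le hp0.le _ v).trans_eq ?_)
      (ENNReal.add_ne_top.2 ⟨lintegral_Icc_abs_rpow_neg_ne_top hp1, ENNReal.one_ne_top⟩)
    rw [Real.volume_Icc, add_sub_cancel_left, ENNReal.ofReal_one]
  rw [← Measure.restrict_univ (μ := volume), ← iUnion_pi_Icc_intCast_eq_univ,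
    ae_restrict_iUnion_iff]
  exact hcube

end SmallDivisors

section Circle

theorem continuousAt_indicator_Icc_one {X M : Type*} [TopologicalSpace X] [LinearOrder X]
    [OrderTopology X] [TopologicalSpace M] [Zero M] [One M] {a b x : X} (ha : x ≠ a)
    (hb : x ≠ b) : ContinuousAt ((Set.Icc a b).indicator (1 : X → M)) x := by
  by_cases hx : x ∈ Set.Icc a b
  · refine (continuousAt_const (y := (1 : M))).congr ?_
    filter_upwards [Icc_mem_nhds (hx.1.lt_of_ne' ha) (hx.2.lt_of_ne hb)] with y hy
    exact (Set.indicator_of_mem hy (1 : X → M)).symm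
  · refine (continuousAt_const (y := (0 : M))).congr ?_
    filter_upwards [isClosed_Icc.isOpen_compl.mem_nhds hx] with y hy
    exact (Set.indicator_of_notMem hy (1 : X → M)).symm

/-- The characteristic function of the arc `[a, b] ⊆ [0, 1]` of the circle `ℝ / ℤ`, where a point
of the circle is represented by its fractional part in `[0, 1)`. -/
noncomputable def arcIndicator (a b : ℝ) (y : UnitAddCircle) : ℂ :=
  (Set.Icc a b).indicator 1 (AddCircle.equivIco 1 0 y : ℝ)

theorem arcIndicator_coe (a b t : ℝ) :
    arcIndicator a b (t : UnitAddCircle) = (Set.Icc a b).indicator 1 (Int.fract t) := by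
  rw [arcIndicator, AddCircle.coe_equivIco_mk_apply, div_one, mul_one]

theorem measurable_arcIndicator (a b : ℝ) : Measurable (arcIndicator a b) :=
  ((measurable_const (a := (1 : ℂ))).indicator measurableSet_Icc).comp
    (measurable_subtype_coe.comp (AddCircle.measurableEquivIco 1 0).measurable)

theorem norm_arcIndicator_le_one (a b : ℝ) (y : UnitAddCircle) : ‖arcIndicator a b y‖ ≤ 1 :=
  (norm_indicator_le_norm_self _ _).trans (by simp)

theorem continuousAt_arcIndicator {a b : ℝ} {y : UnitAddCircle} (h0 : y ≠ ((0 : ℝ) : UnitAddCircle))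
    (ha : y ≠ (a : UnitAddCircle)) (hb : y ≠ (b : UnitAddCircle)) :
    ContinuousAt (arcIndicator a b) y := by
  have coe_equivIco : ((AddCircle.equivIco 1 0 y : ℝ) : UnitAddCircle) = y := AddCircle.coe_equivIco
  exact ContinuousAt.comp (g := (Set.Icc a b).indicator (1 : ℝ → ℂ))
    (continuousAt_indicator_Icc_one (fun h => ha (by rw [← coe_equivIco, h]))
      fun h => hb (by rw [← coe_equivIco, h]))
    (continuous_subtype_val.continuousAt.comp (AddCircle.continuousAt_equivIco 1 0 h0))

theorem fourierCoeff_arcIndicator {a b : ℝ} (ha : 0 ≤ a) (hab : a ≤ b) (hb : b ≤ 1) (n : ℤ) :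
    fourierCoeff (arcIndicator a b) n = ∫ x in a..b, fourier (-n) (x : UnitAddCircle) := by
  have integrand_eq : ∀ x ∈ Set.Ioo (0 : ℝ) 1,
      fourier (-n) (x : UnitAddCircle) • arcIndicator a b x =
        (Set.Icc a b).indicator (fun x : ℝ => fourier (-n) (x : UnitAddCircle)) x := fun x hx => by
    rw [arcIndicator_coe, Int.fract_eq_self.2 ⟨hx.1.le, hx.2⟩]
    by_cases hxab : x ∈ Set.Icc a b <;> simp [hxab, -fourier_apply]
  rw [fourierCoeff_eq_intervalIntegral _ n 0, zero_add, one_div_one, one_smul,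
    intervalIntegral.integral_of_le zero_le_one, intervalIntegral.integral_of_le hab,
    integral_Ioc_eq_integral_Ioo, ← integral_Icc_eq_integral_Ioc,
    setIntegral_congr_fun measurableSet_Ioo integrand_eq, ← integral_Icc_eq_integral_Ioo,
    setIntegral_indicator measurableSet_Icc,
    Set.inter_eq_self_of_subset_right (Set.Icc_subset_Icc ha hb)]

theorem norm_integral_cexp_two_pi_mul_le {c : ℝ} (hc : c ≠ 0) (a b : ℝ) :
    ‖∫ x in a..b, Complex.exp ((2 * π * c * x : ℝ) * Complex.I)‖ ≤ 1 / |c| := by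
  set ω : ℂ := (2 * π * c : ℝ) * Complex.I with hω
  have exponent_eq (x : ℝ) : ((2 * π * c * x : ℝ) * Complex.I : ℂ) = ω * x := by
    rw [hω]; push_cast; ring
  have norm_exp (x : ℝ) : ‖Complex.exp (ω * x)‖ = 1 := by
    rw [← exponent_eq, Complex.norm_exp_ofReal_mul_I]
  have norm_ω : ‖ω‖ = 2 * π * |c| := by simp [hω, abs_of_pos pi_pos]
  have hω0 : ω ≠ 0 := norm_ne_zero_iff.1 (norm_ω ▸ by positivity)
  simp only [exponent_eq]
  calc ‖∫ x : ℝ in a..b, Complex.exp (ω * x)‖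
      = ‖Complex.exp (ω * b) - Complex.exp (ω * a)‖ / (2 * π * |c|) := by
        rw [integral_exp_mul_complex hω0, norm_div, norm_ω]
    _ ≤ 2 / (2 * π * |c|) := by
        gcongr
        exact (norm_sub_le _ _).trans_eq (by rw [norm_exp, norm_exp, one_add_one_eq_two])
    _ = 1 / (π * |c|) := by field_simp
    _ ≤ 1 / |c| := by
        gcongr
        exact le_mul_of_one_le_left (abs_nonneg c) (by linarith [pi_gt_three])

theorem norm_fourierCoeff_arcIndicator_le {a b : ℝ} (ha : 0 ≤ a) (hab : a ≤ b) (hb : b ≤ 1)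
    (n : ℤ) : ‖fourierCoeff (arcIndicator a b) n‖ ≤ (max 1 |(n : ℝ)|)⁻¹ := by
  rw [fourierCoeff_arcIndicator ha hab hb]
  rcases eq_or_ne n 0 with rfl | hn
  · have : ‖((b - a : ℝ) : ℂ)‖ ≤ 1 := by
      rw [Complex.norm_of_nonneg (sub_nonneg.2 hab)]
      linarith
    simpa using this
  · rw [max_eq_right (by exact_mod_cast Int.one_le_abs hn), ← one_div, ← abs_neg (n : ℝ)]
    convert norm_integral_cexp_two_pi_mul_le (c := -(n : ℝ)) (by simpa using hn) a b using 4
    rw [fourier_coe_apply]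
    congr 1; push_cast; ring

theorem countable_setOf_add_coe_eq {c : ℝ} (hc : c ≠ 0) (x y : UnitAddCircle) :
    {t : ℝ | x + ((t * c : ℝ) : UnitAddCircle) = y}.Countable := by
  obtain ⟨s, hs⟩ := QuotientAddGroup.mk_surjective (y - x)
  refine (Set.countable_range fun m : ℤ => (s + m) / c).mono fun t ht => ?_
  have htc : (s : UnitAddCircle) = ((t * c : ℝ) : UnitAddCircle) :=
    hs.trans (sub_eq_iff_eq_add'.2 ht.symm)
  obtain ⟨m, hm⟩ := AddSubgroup.mem_zmultiples_iff.1 (QuotientAddGroup.eq_iff_sub_mem.1 htc)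
  refine ⟨-m, ?_⟩
  rw [zsmul_eq_mul, mul_one] at hm
  rw [div_eq_iff hc, Int.cast_neg, hm]
  ring

end Circle

section Torus

variable {ι : Type*}

/-- The linear flow `t ↦ t α` in direction `α`, projected to the torus. -/
noncomputable def torusFlow (α : ι → ℝ) (t : ℝ) : UnitAddTorus ι :=
  fun i => ((t * α i : ℝ) : UnitAddCircle)

theorem continuous_torusFlow (α : ι → ℝ) : Continuous (torusFlow α) :=
  continuous_pi fun _ => (AddCircle.continuous_mk' 1).comp (by fun_prop)

/-- The integral of the observable `f` along the orbit of `x` under the flow in direction `α`, up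
to time `T`; for the characteristic function of a set, the time the orbit spends in it. -/
noncomputable def orbitIntegral (α : ι → ℝ) (f : UnitAddTorus ι → ℂ) (T : ℝ)
    (x : UnitAddTorus ι) : ℂ :=
  ∫ t in (0 : ℝ)..T, f (x + torusFlow α t)

theorem continuous_orbitIntegral [Countable ι] {α : ι → ℝ} {f : UnitAddTorus ι → ℂ} {M T : ℝ}
    (hf : Measurable f) (hM : ∀ x, ‖f x‖ ≤ M)
    (hcont : ∀ x, ∀ᵐ t, ContinuousAt f (x + torusFlow α t)) :
    Continuous (orbitIntegral α f T) := by
  refine continuous_iff_continuousAt.2 fun x => ?_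
  refine intervalIntegral.continuousAt_of_dominated_interval (bound := fun _ => M)
    (.of_forall fun y => ?_) (.of_forall fun y => ae_of_all _ fun t _ => hM _)
    intervalIntegrable_const ?_
  · exact (hf.comp ((continuous_torusFlow α).measurable.const_add y)).aestronglyMeasurable
  · filter_upwards [hcont x] with t ht _
    exact ContinuousAt.comp (f := fun y => y + torusFlow α t) ht (by fun_prop)

variable [Fintype ι]

theorem mFourierCoeff_eq_integral_pi (f : UnitAddTorus ι → ℂ) (n : ι → ℤ) :
    UnitAddTorus.mFourierCoeff f n = ∫ x, UnitAddTorus.mFourier (-n) x * f x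
      ∂Measure.pi fun _ => AddCircle.haarAddCircle :=
  rfl

theorem norm_mFourier_apply_le_one (n : ι → ℤ) (x : UnitAddTorus ι) :
    ‖UnitAddTorus.mFourier n x‖ ≤ 1 :=
  ((UnitAddTorus.mFourier n).norm_coe_le_norm x).trans UnitAddTorus.mFourier_norm.le

theorem mFourier_apply_add (n : ι → ℤ) (x y : UnitAddTorus ι) :
    UnitAddTorus.mFourier n (x + y) = UnitAddTorus.mFourier n x * UnitAddTorus.mFourier n y := by
  simp [UnitAddTorus.mFourier, Finset.prod_mul_distrib, AddCircle.toCircle_add]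

theorem mFourier_apply_torusFlow (α : ι → ℝ) (n : ι → ℤ) (t : ℝ) :
    UnitAddTorus.mFourier n (torusFlow α t) =
      Complex.exp ((2 * π * (∑ i, (n i : ℝ) * α i) * t : ℝ) * Complex.I) := by
  simp only [UnitAddTorus.mFourier, ContinuousMap.coe_mk, torusFlow, fourier_coe_apply]
  rw [← Complex.exp_sum]
  congr 1
  push_cast
  simp only [Finset.mul_sum, Finset.sum_mul]
  exact Finset.sum_congr rfl fun i _ => by ring

section OrbitIntegral

variable {α : ι → ℝ} {f : UnitAddTorus ι → ℂ} {M T : ℝ}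

theorem mFourierCoeff_comp_add_torusFlow (f : UnitAddTorus ι → ℂ) (n : ι → ℤ) (t : ℝ) :
    UnitAddTorus.mFourierCoeff (fun x => f (x + torusFlow α t)) n =
      Complex.exp ((2 * π * (∑ i, (n i : ℝ) * α i) * t : ℝ) * Complex.I) *
        UnitAddTorus.mFourierCoeff f n := by
  have mFourier_mul_neg (y : UnitAddTorus ι) :
      UnitAddTorus.mFourier n y * UnitAddTorus.mFourier (-n) y = 1 := by
    rw [← UnitAddTorus.mFourier_add, add_neg_cancel, UnitAddTorus.mFourier_zero,
      ContinuousMap.one_apply]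
  rw [mFourierCoeff_eq_integral_pi, mFourierCoeff_eq_integral_pi, ← mFourier_apply_torusFlow,
    ← integral_const_mul, ← integral_add_right_eq_self (fun x =>
      UnitAddTorus.mFourier n (torusFlow α t) * (UnitAddTorus.mFourier (-n) x * f x))
      (torusFlow α t)]
  refine integral_congr_ae (.of_forall fun x => ?_)
  simp only [mFourier_apply_add]
  linear_combination (-UnitAddTorus.mFourier (-n) x * f (x + torusFlow α t)) *
    mFourier_mul_neg (torusFlow α t)

theorem integrable_mFourier_mul_comp_add_torusFlow (hf : Measurable f) (hM : ∀ x, ‖f x‖ ≤ M)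
    (n : ι → ℤ) (ν : Measure ℝ) [IsFiniteMeasure ν] (μ : Measure (UnitAddTorus ι))
    [IsFiniteMeasure μ] :
    Integrable (Function.uncurry fun (t : ℝ) (x : UnitAddTorus ι) =>
      UnitAddTorus.mFourier n x * f (x + torusFlow α t)) (ν.prod μ) := by
  refine Integrable.of_bound (C := 1 * M) (Measurable.aestronglyMeasurable ?_)
    (ae_of_all _ fun z => ?_)
  · exact ((UnitAddTorus.mFourier n).continuous.measurable.comp measurable_snd).mul
      (hf.comp (measurable_snd.add ((continuous_torusFlow α).measurable.comp measurable_fst)))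
  · exact norm_mul_le_of_le (norm_mFourier_apply_le_one n _) (hM _)

theorem mFourierCoeff_orbitIntegral (hf : Measurable f) (hM : ∀ x, ‖f x‖ ≤ M) (n : ι → ℤ) :
    UnitAddTorus.mFourierCoeff (orbitIntegral α f T) n =
      (∫ t in (0 : ℝ)..T, Complex.exp ((2 * π * (∑ i, (n i : ℝ) * α i) * t : ℝ) * Complex.I)) *
        UnitAddTorus.mFourierCoeff f n := by
  calc UnitAddTorus.mFourierCoeff (orbitIntegral α f T) n
      = ∫ t in (0 : ℝ)..T, UnitAddTorus.mFourierCoeff (fun x => f (x + torusFlow α t)) n := by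
        simp only [mFourierCoeff_eq_integral_pi, orbitIntegral,
          ← intervalIntegral.integral_const_mul]
        exact (intervalIntegral_integral_swap (integrable_mFourier_mul_comp_add_torusFlow hf hM (-n)
          (volume.restrict (Set.Ioc _ _)) _)).symm
    _ = _ := by
        simp only [mFourierCoeff_comp_add_torusFlow f, intervalIntegral.integral_mul_const]

theorem norm_mFourierCoeff_orbitIntegral_le (hf : Measurable f) (hM : ∀ x, ‖f x‖ ≤ M) {n : ι → ℤ}
    (hn : ∑ i, (n i : ℝ) * α i ≠ 0) :
    ‖UnitAddTorus.mFourierCoeff (orbitIntegral α f T) n‖ ≤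
      ‖UnitAddTorus.mFourierCoeff f n‖ / |∑ i, (n i : ℝ) * α i| := by
  rw [mFourierCoeff_orbitIntegral hf hM, norm_mul, div_eq_mul_one_div, mul_comm]
  gcongr
  exact norm_integral_cexp_two_pi_mul_le hn 0 T

theorem mFourierCoeff_orbitIntegral_zero (hf : Measurable f) (hM : ∀ x, ‖f x‖ ≤ M) :
    UnitAddTorus.mFourierCoeff (orbitIntegral α f T) 0 = T * UnitAddTorus.mFourierCoeff f 0 := by
  simp [mFourierCoeff_orbitIntegral hf hM]

end OrbitIntegral

theorem norm_sub_mFourierCoeff_zero_le {F : UnitAddTorus ι → ℂ} (hF : Continuous F)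
    {w : (ι → ℤ) → ℝ} (hw : Summable w) (hw0 : 0 ≤ w 0)
    (hFw : ∀ n ≠ 0, ‖UnitAddTorus.mFourierCoeff F n‖ ≤ w n) (x : UnitAddTorus ι) :
    ‖F x - UnitAddTorus.mFourierCoeff F 0‖ ≤ ∑' n, w n := by
  let G : C(UnitAddTorus ι, ℂ) := ⟨F, hF⟩
  have hsum : Summable (UnitAddTorus.mFourierCoeff G) := by
    refine hw.of_norm_bounded_eventually ?_
    filter_upwards [(Set.finite_singleton (0 : ι → ℤ)).compl_mem_cofinite] with n hn
    exact hFw n hn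
  refine ((UnitAddTorus.hasSum_mFourier_series_apply_of_summable hsum x).sub
    (hasSum_ite_eq (0 : ι → ℤ) (UnitAddTorus.mFourierCoeff F 0))).norm_le_of_bounded hw.hasSum
    fun n => ?_
  rcases eq_or_ne n 0 with rfl | hn
  · simpa [G, UnitAddTorus.mFourier_zero] using hw0
  · rw [if_neg hn, sub_zero, norm_smul]
    exact (mul_le_of_le_one_right (norm_nonneg _) (norm_mFourier_apply_le_one n x)).trans
      (hFw n hn)

theorem norm_orbitIntegral_sub_le {α : ι → ℝ} {f : UnitAddTorus ι → ℂ} {M T : ℝ}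
    (hα : LinearIndependent ℤ α) (hf : Measurable f) (hM : ∀ x, ‖f x‖ ≤ M)
    (hcont : ∀ x, ∀ᵐ t, ContinuousAt f (x + torusFlow α t)) {w : (ι → ℤ) → ℝ}
    (hfw : ∀ n, ‖UnitAddTorus.mFourierCoeff f n‖ ≤ w n)
    (hw : Summable fun n => w n / |∑ i, (n i : ℝ) * α i|) (x : UnitAddTorus ι) :
    ‖orbitIntegral α f T x - T * UnitAddTorus.mFourierCoeff f 0‖ ≤
      ∑' n, w n / |∑ i, (n i : ℝ) * α i| := by
  rw [← mFourierCoeff_orbitIntegral_zero (α := α) hf hM]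
  refine norm_sub_mFourierCoeff_zero_le (continuous_orbitIntegral hf hM hcont) hw (by simp)
    (fun n hn => ?_) x
  have sum_ne_zero : ∑ i, (n i : ℝ) * α i ≠ 0 := fun h =>
    hn (funext (Fintype.linearIndependent_iff.1 hα n (by simpa only [zsmul_eq_mul] using h)))
  refine (norm_mFourierCoeff_orbitIntegral_le hf hM sum_ne_zero).trans ?_
  gcongr
  exact hfw n

/-- The characteristic function of the box `∏ i, [a i, b i] ⊆ [0, 1]^ι` on the torus. -/
noncomputable def boxIndicator (a b : ι → ℝ) (x : UnitAddTorus ι) : ℂ :=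
  ∏ i, arcIndicator (a i) (b i) (x i)

theorem boxIndicator_coe (a b x : ι → ℝ) :
    boxIndicator a b (fun i => (x i : UnitAddCircle)) =
      (Set.Icc a b).indicator 1 fun i => Int.fract (x i) := by
  simp only [boxIndicator, arcIndicator_coe]
  rw [← Set.pi_univ_Icc, ← Finset.coe_univ, Set.indicator_pi_one_apply]

theorem measurable_boxIndicator (a b : ι → ℝ) : Measurable (boxIndicator a b) :=
  Finset.measurable_fun_prod _ fun i _ =>
    (measurable_arcIndicator (a i) (b i)).comp (measurable_pi_apply i)

theorem norm_boxIndicator_le_one (a b : ι → ℝ) (x : UnitAddTorus ι) : ‖boxIndicator a b x‖ ≤ 1 := by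
  rw [boxIndicator, norm_prod]
  exact Finset.prod_le_one (fun i _ => norm_nonneg _) fun i _ => norm_arcIndicator_le_one _ _ _

theorem ae_continuousAt_boxIndicator_add_torusFlow {α : ι → ℝ} (hα : ∀ i, α i ≠ 0) (a b : ι → ℝ)
    (x : UnitAddTorus ι) : ∀ᵐ t, ContinuousAt (boxIndicator a b) (x + torusFlow α t) := by
  have ae_ne (i : ι) (c : ℝ) : ∀ᵐ t, (x + torusFlow α t) i ≠ (c : UnitAddCircle) :=
    (countable_setOf_add_coe_eq (hα i) (x i) c).ae_notMem _
  filter_upwards [ae_all_iff.2 fun i => ae_ne i 0, ae_all_iff.2 fun i => ae_ne i (a i),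
    ae_all_iff.2 fun i => ae_ne i (b i)] with t h0 ha hb
  exact tendsto_finsetProd _ fun i _ =>
    ContinuousAt.comp (g := arcIndicator (a i) (b i)) (f := fun y : UnitAddTorus ι => y i)
      (continuousAt_arcIndicator (h0 i) (ha i) (hb i)) (continuous_apply i).continuousAt

theorem mFourierCoeff_boxIndicator (a b : ι → ℝ) (n : ι → ℤ) :
    UnitAddTorus.mFourierCoeff (boxIndicator a b) n =
      ∏ i, fourierCoeff (arcIndicator (a i) (b i)) (n i) := by
  simp only [fourierCoeff, mFourierCoeff_eq_integral_pi]
  rw [← integral_fintype_prod_eq_prod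
    (f := fun i t => fourier (-n i) t • arcIndicator (a i) (b i) t)]
  simp [UnitAddTorus.mFourier, boxIndicator, Finset.prod_mul_distrib, -fourier_apply]

theorem mFourierCoeff_boxIndicator_zero {a b : ι → ℝ} (ha : 0 ≤ a) (hab : a ≤ b) (hb : b ≤ 1) :
    UnitAddTorus.mFourierCoeff (boxIndicator a b) 0 = ∏ i, ((b i - a i : ℝ) : ℂ) := by
  simp [mFourierCoeff_boxIndicator, fourierCoeff_arcIndicator (ha _) (hab _) (hb _)]

theorem norm_mFourierCoeff_boxIndicator_le {a b : ι → ℝ} (ha : 0 ≤ a) (hab : a ≤ b) (hb : b ≤ 1)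
    (n : ι → ℤ) :
    ‖UnitAddTorus.mFourierCoeff (boxIndicator a b) n‖ ≤ ∏ i, (max 1 |(n i : ℝ)|)⁻¹ := by
  rw [mFourierCoeff_boxIndicator, norm_prod]
  exact Finset.prod_le_prod (fun i _ => norm_nonneg _) fun i _ =>
    norm_fourierCoeff_arcIndicator_le (ha i) (hab i) (hb i) (n i)

theorem norm_orbitIntegral_boxIndicator_sub_le {α : ι → ℝ} (hα : LinearIndependent ℤ α)
    (hs : Summable (smallDivisorTerm α)) {a b : ι → ℝ} (ha : 0 ≤ a) (hab : a ≤ b) (hb : b ≤ 1)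
    (T : ℝ) (x : UnitAddTorus ι) :
    ‖orbitIntegral α (boxIndicator a b) T x - T * ∏ i, ((b i - a i : ℝ) : ℂ)‖ ≤
      ∑' n, smallDivisorTerm α n := by
  rw [← mFourierCoeff_boxIndicator_zero ha hab hb]
  exact norm_orbitIntegral_sub_le hα (measurable_boxIndicator a b) (norm_boxIndicator_le_one a b)
    (ae_continuousAt_boxIndicator_add_torusFlow (fun i => hα.ne_zero i) a b)
    (norm_mFourierCoeff_boxIndicator_le ha hab hb) hs x

end Torus

theorem eVariationOn_smul_const_Icc {E : Type*} [NormedAddCommGroup E] [NormedSpace ℝ E] (v : E)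
    {a b : ℝ} (hab : a ≤ b) :
    eVariationOn (fun t : ℝ => t • v) (Set.Icc a b) = ENNReal.ofReal (‖v‖ * (b - a)) := by
  have dist_smul (s t : ℝ) : dist (s • v) (t • v) = ‖v‖ * dist s t := by
    rw [dist_eq_norm, ← sub_smul, norm_smul, mul_comm, Real.dist_eq, Real.norm_eq_abs]
  refine le_antisymm ?_ ?_
  · have hlip : LipschitzWith ‖v‖₊ fun t : ℝ => t • v :=
      .of_dist_le_mul fun s t => (dist_smul s t).le
    calc eVariationOn (fun t : ℝ => t • v) (Set.Icc a b)
        ≤ ‖v‖₊ * eVariationOn id (Set.Icc a b) :=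
          hlip.lipschitzOnWith.comp_eVariationOn_le (Set.mapsTo_univ _ _)
      _ = ENNReal.ofReal (‖v‖ * (b - a)) := by
          rw [eVariationOn_id_Icc, ENNReal.ofReal_mul (norm_nonneg v), ofReal_norm]
          rfl
  · calc ENNReal.ofReal (‖v‖ * (b - a)) = edist (b • v) (a • v) := by
          rw [edist_dist, dist_smul, Real.dist_eq, abs_of_nonneg (sub_nonneg.2 hab)]
      _ ≤ eVariationOn (fun t : ℝ => t • v) (Set.Icc a b) :=
          eVariationOn.edist_le _ (Set.right_mem_Icc.2 hab) (Set.left_mem_Icc.2 hab)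

theorem ofReal_deltaCurve_line {d : ℕ} (α : Fin d → ℝ) {a b : Fin d → ℝ} (hab : a ≤ b) (T : ℝ) :
    (DeltaCurve (fun t => t • α) (Set.Icc a b) T : ℂ) =
      orbitIntegral α (boxIndicator a b) T 0 - T * ∏ i, ((b i - a i : ℝ) : ℂ) := by
  have indicator_eq (t : ℝ) : boxIndicator a b (0 + torusFlow α t) =
      ((Set.Icc a b).indicator (fun _ => (1 : ℝ)) fun i => Int.fract ((t • α) i) : ℝ) := by
    rw [zero_add]
    refine (boxIndicator_coe a b (t • α)).trans ?_
    classical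
    rw [Set.indicator_apply, Set.indicator_apply]
    split_ifs <;> simp
  rw [DeltaCurve, Real.volume_Icc_pi_toReal hab, orbitIntegral]
  simp only [indicator_eq, intervalIntegral.integral_ofReal]
  push_cast
  rfl

theorem abs_deltaCurve_line_le {d : ℕ} {α : Fin d → ℝ} (hα : LinearIndependent ℤ α)
    (hs : Summable (smallDivisorTerm α)) {a b : Fin d → ℝ} (hR : Set.Icc a b ⊆ Set.Icc 0 1)
    (T : ℝ) :
    |DeltaCurve (fun t => t • α) (Set.Icc a b) T| ≤ ∑' n, smallDivisorTerm α n := by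
  by_cases hab : a ≤ b
  · rw [← Real.norm_eq_abs, ← Complex.norm_real, ofReal_deltaCurve_line α hab]
    exact norm_orbitIntegral_boxIndicator_sub_le hα hs (hR (Set.left_mem_Icc.2 hab)).1 hab
      (hR (Set.right_mem_Icc.2 hab)).2 T 0
  · simpa [DeltaCurve, Set.Icc_eq_empty hab] using tsum_nonneg (smallDivisorTerm_nonneg α)

theorem iSup_abs_deltaCurve_div_le {d : ℕ} {g : ℝ → Fin d → ℝ} {C T : ℝ} (hC : 0 ≤ C) (hT : 0 < T)
    (h : ∀ a b : Fin d → ℝ, Set.Icc a b ⊆ Set.Icc 0 1 → |DeltaCurve g (Set.Icc a b) T| ≤ C) :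
    ⨆ (a : Fin d → ℝ) (b : Fin d → ℝ) (_ : Set.Icc a b ⊆ Set.Icc 0 1),
      |DeltaCurve g (Set.Icc a b) T / T| ≤ C / T := by
  have hCT : 0 ≤ C / T := by positivity
  refine Real.iSup_le (fun a => Real.iSup_le (fun b => Real.iSup_le (fun hR => ?_) hCT) hCT) hCT
  rw [abs_div, abs_of_pos hT]
  gcongr
  exact h a b hR

theorem not_frequently_mul_div_le_of_le_div {c C : ℝ} (hc : 0 < c) {u D : ℝ → ℝ}
    (hu : Tendsto u atTop atTop) (hD : ∀ T > 0, D T ≤ C / T) :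
    ¬ ∃ c' > 0, ∃ᶠ T in atTop, c' * (u (c * T) / (c * T)) ≤ D T := by
  rintro ⟨c', hc', hfreq⟩
  have hlarge : ∀ᶠ T in atTop, C * c / c' < u (c * T) :=
    (hu.comp (tendsto_id.const_mul_atTop hc)).eventually_gt_atTop _
  obtain ⟨T, hlower, hT, hT0⟩ :=
    (hfreq.and_eventually (hlarge.and (eventually_gt_atTop 0))).exists
  have hle := hlower.trans (hD T hT0)
  rw [← mul_div_assoc, div_le_div_iff₀ (by positivity) hT0] at hle
  rw [div_lt_iff₀ hc'] at hT
  nlinarith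

theorem no_van_aardenne_ehrenfest_for_curves_general {d : ℕ} (hd : 0 < d) :
    ∀ᵐ α : Fin d → ℝ, ∃ c C : ℝ, 0 < c ∧ 0 < C ∧
      (∀ T : ℝ, 0 < T →
        eVariationOn (fun t : ℝ => WithLp.toLp 2 (t • α)) (Set.Icc 0 T) =
          ENNReal.ofReal (c * T)) ∧
      (∀ (T : ℝ) (a b : Fin d → ℝ), Set.Icc a b ⊆ Set.Icc 0 1 →
        |DeltaCurve (fun t => t • α) (Set.Icc a b) T| ≤ C) ∧
      ∀ u : ℝ → ℝ, Tendsto u atTop atTop →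
        ¬ ∃ c' > 0, ∃ᶠ T : ℝ in atTop, c' * (u (c * T) / (c * T)) ≤
          ⨆ (a : Fin d → ℝ) (b : Fin d → ℝ) (_ : Set.Icc a b ⊆ Set.Icc 0 1),
            |DeltaCurve (fun t => t • α) (Set.Icc a b) T / T| := by
  filter_upwards [ae_linearIndependent_int, ae_summable_smallDivisorTerm] with α hα hs
  have hC : 0 < ∑' n, smallDivisorTerm α n + 1 :=
    add_pos_of_nonneg_of_pos (tsum_nonneg (smallDivisorTerm_nonneg α)) one_pos
  have hα0 : WithLp.toLp 2 α ≠ 0 := fun h =>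
    hα.ne_zero ⟨0, hd⟩ (congrFun ((WithLp.toLp_eq_zero 2).1 h) _)
  have hbox (T : ℝ) (a b : Fin d → ℝ) (hR : Set.Icc a b ⊆ Set.Icc 0 1) :
      |DeltaCurve (fun t => t • α) (Set.Icc a b) T| ≤ ∑' n, smallDivisorTerm α n + 1 :=
    (abs_deltaCurve_line_le hα hs hR T).trans (le_add_of_nonneg_right zero_le_one)
  have hlen (T : ℝ) (hT : 0 < T) :
      eVariationOn (fun t : ℝ => WithLp.toLp 2 (t • α)) (Set.Icc 0 T) =
        ENNReal.ofReal (‖WithLp.toLp 2 α‖ * T) := by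
    simpa only [WithLp.toLp_smul, sub_zero] using
      eVariationOn_smul_const_Icc (WithLp.toLp 2 α) hT.le
  exact ⟨‖WithLp.toLp 2 α‖, _, norm_pos_iff.2 hα0, hC, hlen, hbox, fun u hu =>
    not_frequently_mul_div_le_of_le_div (norm_pos_iff.2 hα0) hu fun T hT =>
      iSup_abs_deltaCurve_div_le hC.le hT (hbox T)⟩

/-- There is no van Aardenne–Ehrenfest type theorem for continuous curves: in every
dimension `d ≥ 2` there is a continuous curve `g` of positive linear arc length
(`ℓ_T = cT`, measured as the Euclidean variation of `g` on `[0,T]`) whose box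
discrepancy is bounded; in particular for `d ≥ 3`, `0 < ε < d - 2`, the lower bound
`sup_R |Δ_T(g,R)/T| = Ω((log ℓ_T)^{d-2-ε}/ℓ_T)` fails for this curve. -/
theorem no_van_aardenne_ehrenfest_for_curves {d : ℕ} (hd : 2 ≤ d) :
    ∃ (g : ℝ → (Fin d → ℝ)) (c C : ℝ), 0 < c ∧ 0 < C ∧
      Continuous g ∧
      (∀ T : ℝ, 0 < T →
        eVariationOn (fun t => (WithLp.equiv 2 (Fin d → ℝ)).symm (g t)) (Set.Icc 0 T) =
          ENNReal.ofReal (c * T)) ∧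
      (∀ T : ℝ, 0 < T → ∀ a b : Fin d → ℝ, Set.Icc a b ⊆ Set.Icc 0 1 →
        |DeltaCurve g (Set.Icc a b) T| ≤ C) ∧
      (∀ ε : ℝ, 0 < ε → ε < (d : ℝ) - 2 →
        ¬ ∃ c' > 0, ∃ᶠ T : ℝ in atTop,
          c' * (Real.log (c * T) ^ ((d : ℝ) - 2 - ε) / (c * T)) ≤
            ⨆ (a : Fin d → ℝ) (b : Fin d → ℝ) (_ : Set.Icc a b ⊆ Set.Icc 0 1),
              |DeltaCurve g (Set.Icc a b) T / T|) := by
  obtain ⟨α, c, C, hc, hC, hlen, hbox, hfail⟩ :=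
    (no_van_aardenne_ehrenfest_for_curves_general (d := d) (by omega)).exists
  exact ⟨fun t => t • α, c, C, hc, hC, by fun_prop, hlen, fun T _ => hbox T, fun ε _ hε =>
    hfail _ ((tendsto_rpow_atTop (sub_pos.2 hε)).comp tendsto_log_atTop)⟩
end
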